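/- Let α > 0, T > 0, a ∈ ℝ, and let h : [0,T] → ℝ be continuous. Define the single layer heat potential ũ(x,t) = (1/α)·∫_0^t U*(x−a, t−s) h(s) ds. Then for every t ∈ (0,T] and every x > a, ũ(·,t) is differentiable in x with ∂ũ/∂x(x,t) = (1/α)·∫_0^t (∂U*/∂z)(x−a, t−s) h(s) ds = −(1/α)·∫_0^t (α(x−a)/(2(t−s)))·U*(x−a, t−s) h(s) ds, and the interior conormal derivative satisfies the jump relation lim_{x→a⁺} ( −∂ũ/∂x(x,t) ) = (1/2)·h(t). -/

import Mathlib

open MeasureTheory Real Filter intervalIntegral Topology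

/-- The fundamental solution of the one-dimensional heat equation with heat
capacity constant `α`: `U*(z,τ) = (α/(4πτ))^{1/2} · exp(−α z²/(4τ))` for `τ > 0`,
and `U*(z,τ) = 0` otherwise. -/
noncomputable def Ustar (α z τ : ℝ) : ℝ :=
  if 0 < τ then Real.sqrt (α / (4 * Real.pi * τ)) * Real.exp (-(α * z ^ 2) / (4 * τ)) else 0

lemma slp_exp_bound1 (c w : ℝ) (hc : 0 < c) (hw : 0 ≤ w) : w * Real.exp (-(c * w)) ≤ 1 / c := by
  rw [Real.exp_neg, ← div_eq_mul_inv, div_le_div_iff₀ (Real.exp_pos _) hc]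
  nlinarith [Real.add_one_le_exp (c * w)]

lemma slp_exp_bound2 (c w : ℝ) (hc : 0 < c) (hw : 0 ≤ w) :
    w ^ 2 * Real.exp (-(c * w)) ≤ 2 / c ^ 2 := by
  rw [Real.exp_neg, ← div_eq_mul_inv, div_le_div_iff₀ (Real.exp_pos _) (by positivity)]
  have := Real.quadratic_le_exp_of_nonneg (mul_nonneg hc.le hw)
  have h2 : 0 ≤ c * w := by positivity
  nlinarith

lemma slp_Ustar_nonneg (α z τ : ℝ) : 0 ≤ Ustar α z τ := by
  unfold Ustar
  split_ifs <;> positivity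

lemma slp_Ustar_measurable (α z t : ℝ) : Measurable (fun s => Ustar α z (t - s)) := by
  unfold Ustar
  refine Measurable.ite ?_ ?_ measurable_const
  · exact measurableSet_lt measurable_const (by fun_prop)
  · fun_prop

/-- Basic pointwise bound. -/
lemma slp_Ustar_le (α z δ τ : ℝ) (hα : 0 < α) (hδ : 0 < δ) (hz : δ ≤ z) (hτ : 0 < τ) :
    Ustar α z τ ≤ (1 + α / (4 * π) * τ⁻¹) * Real.exp (-(α * δ ^ 2 / 4 * τ⁻¹)) := by
  unfold Ustar
  rw [if_pos hτ]
  have h1 : Real.sqrt (α / (4 * π * τ)) ≤ 1 + α / (4 * π) * τ⁻¹ := by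
    have e : α / (4 * π * τ) = α / (4 * π) * τ⁻¹ := by field_simp
    rw [e]
    have : 0 ≤ α / (4 * π) * τ⁻¹ := by positivity
    rw [Real.sqrt_le_left (by positivity)]
    nlinarith
  have h2 : Real.exp (-(α * z ^ 2) / (4 * τ)) ≤ Real.exp (-(α * δ ^ 2 / 4 * τ⁻¹)) := by
    apply Real.exp_le_exp.2
    have e : -(α * z ^ 2) / (4 * τ) = -(α * z ^ 2 / 4 * τ⁻¹) := by field_simp
    rw [e]
    have := hτ.le
    gcongr
  exact mul_le_mul h1 h2 (Real.exp_pos _).le (by positivity)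

lemma slp_Ustar_bdd (α δ : ℝ) (hα : 0 < α) (hδ : 0 < δ) :
    ∃ C, ∀ z τ, δ ≤ z → Ustar α z τ ≤ C := by
  refine ⟨1 + α / (4 * π) * (1 / (α * δ ^ 2 / 4)), fun z τ hz => ?_⟩
  by_cases hτ : 0 < τ
  · refine (slp_Ustar_le α z δ τ hα hδ hz hτ).trans ?_
    have hw : 0 ≤ τ⁻¹ := by positivity
    have hc : 0 < α * δ ^ 2 / 4 := by positivity
    have h1 := slp_exp_bound1 _ _ hc hw
    have h0 : Real.exp (-(α * δ ^ 2 / 4 * τ⁻¹)) ≤ 1 := Real.exp_le_one_iff.2 (by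
      have := mul_nonneg hc.le hw; linarith)
    have hB : 0 ≤ α / (4 * π) := by positivity
    have := mul_le_mul_of_nonneg_left h1 hB
    linarith
  · unfold Ustar
    rw [if_neg hτ]
    positivity

lemma slp_dUstar_bdd (α δ K : ℝ) (hα : 0 < α) (hδ : 0 < δ) :
    ∃ C, ∀ z τ, δ ≤ z → z ≤ K → |α * z / (2 * τ) * Ustar α z τ| ≤ C := by
  refine ⟨α * |K| / 2 * (1 / (α * δ ^ 2 / 4) + α / (4 * π) * (2 / (α * δ ^ 2 / 4) ^ 2)),
    fun z τ hz hK => ?_⟩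
  by_cases hτ : 0 < τ
  · have hz0 : 0 < z := hδ.trans_le hz
    have hU := slp_Ustar_le α z δ τ hα hδ hz hτ
    have hU0 := slp_Ustar_nonneg α z τ
    rw [abs_of_nonneg (by positivity)]
    have hw : 0 ≤ τ⁻¹ := by positivity
    have hc : 0 < α * δ ^ 2 / 4 := by positivity
    have h1 := slp_exp_bound1 _ _ hc hw
    have h2 := slp_exp_bound2 _ _ hc hw
    have hB : 0 ≤ α / (4 * π) := by positivity
    have h3 := mul_le_mul_of_nonneg_left h2 hB
    have hKz : z ≤ |K| := hK.trans (le_abs_self K)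
    calc α * z / (2 * τ) * Ustar α z τ = α * z / 2 * (τ⁻¹ * Ustar α z τ) := by field_simp
      _ ≤ α * |K| / 2 * (τ⁻¹ * ((1 + α / (4 * π) * τ⁻¹) *
            Real.exp (-(α * δ ^ 2 / 4 * τ⁻¹)))) := by gcongr
      _ ≤ _ := by
        apply mul_le_mul_of_nonneg_left _ (by positivity)
        linarith
  · unfold Ustar
    rw [if_neg hτ]
    simp only [mul_zero, abs_zero]
    positivity

lemma slp_hasDerivAt_Ustar (α a τ x : ℝ) :
    HasDerivAt (fun x' => Ustar α (x' - a) τ)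
      (-(α * (x - a) / (2 * τ) * Ustar α (x - a) τ)) x := by
  unfold Ustar
  by_cases hτ : 0 < τ
  · simp only [if_pos hτ]
    have h1 : HasDerivAt (fun x' : ℝ => -(α * (x' - a) ^ 2) / (4 * τ))
        (-(α * (2 * (x - a))) / (4 * τ)) x := by
      have := ((((hasDerivAt_id x).sub_const a).pow 2).const_mul α).neg.div_const (4 * τ)
      refine this.congr_deriv ?_
      simp
    refine (h1.exp.const_mul (Real.sqrt (α / (4 * π * τ)))).congr_deriv ?_
    field_simp
    ring
  · simp only [if_neg hτ, mul_zero, neg_zero]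
    exact hasDerivAt_const _ _

lemma slp_deriv (α T a : ℝ) (hα : 0 < α) 
    (h : ℝ → ℝ) (hh : ContinuousOn h (Set.Icc 0 T))
    (t : ℝ) (ht : 0 < t) (htT : t ≤ T) (x : ℝ) (hx : a < x) :
      HasDerivAt (fun x' => (1 / α) * ∫ s in (0:ℝ)..t, Ustar α (x' - a) (t - s) * h s)
        (-(1 / α) *
          ∫ s in (0:ℝ)..t, (α * (x - a) / (2 * (t - s))) * Ustar α (x - a) (t - s) * h s) x := by
  have hδ : 0 < (x - a) / 2 := by linarith
  obtain ⟨C, hC⟩ := slp_Ustar_bdd α ((x - a) / 2) hα hδ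
  obtain ⟨D, hD⟩ := slp_dUstar_bdd α ((x - a) / 2) (2 * (x - a)) hα hδ
  have hsub : Set.Ioc 0 t ⊆ Set.Icc 0 T := fun s hs => ⟨hs.1.le, hs.2.trans htT⟩
  obtain ⟨M, hM⟩ := isCompact_Icc.exists_bound_of_continuousOn hh
  have huI : Set.uIoc 0 t = Set.Ioc 0 t := Set.uIoc_of_le ht.le
  have hmeas : AEStronglyMeasurable h (volume.restrict (Set.uIoc 0 t)) := by
    rw [huI]; exact (hh.mono hsub).aestronglyMeasurable measurableSet_Ioc
  have hUm : ∀ z, AEStronglyMeasurable (fun s => Ustar α z (t - s) * h s)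
      (volume.restrict (Set.uIoc 0 t)) := fun z =>
    (slp_Ustar_measurable α z t).aestronglyMeasurable.mul hmeas
  have key := intervalIntegral.hasDerivAt_integral_of_dominated_loc_of_deriv_le
    (μ := volume) (a := 0) (b := t) (x₀ := x) (s := Metric.ball x ((x - a) / 2))
    (F := fun x' s => Ustar α (x' - a) (t - s) * h s)
    (F' := fun x' s => -(α * (x' - a) / (2 * (t - s)) * Ustar α (x' - a) (t - s)) * h s)
    (bound := fun _ => D * M) (Metric.ball_mem_nhds x hδ)
    (Eventually.of_forall fun x' => hUm _)
    ?_ ?_ ?_ ?_ ?_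
  · have k2 := key.2.const_mul (1 / α)
    refine k2.congr_deriv ?_
    symm
    rw [neg_mul, ← mul_neg, ← intervalIntegral.integral_neg]
    congr 1
    apply intervalIntegral.integral_congr
    intro s _
    simp only [neg_mul]
  · refine IntervalIntegrable.mono_fun' (g := fun _ => C * M) (by simp) (hUm _) ?_
    rw [huI]
    refine (ae_restrict_iff' measurableSet_Ioc).2 (Eventually.of_forall fun s hs => ?_)
    have h1 := hC (x - a) (t - s) (by linarith)
    have h0 := slp_Ustar_nonneg α (x - a) (t - s)
    change ‖Ustar α (x - a) (t - s) * h s‖ ≤ C * M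
    rw [norm_mul, Real.norm_of_nonneg h0]
    exact mul_le_mul h1 (hM s (hsub hs)) (norm_nonneg _) (h0.trans h1)
  · refine AEStronglyMeasurable.mul ?_ hmeas
    apply Measurable.aestronglyMeasurable
    have := slp_Ustar_measurable α (x - a) t
    fun_prop
  · refine Eventually.of_forall fun s hs x' hx' => ?_
    rw [huI] at hs
    rw [Metric.mem_ball, Real.dist_eq, abs_lt] at hx'
    have h1 := hD (x' - a) (t - s) (by linarith) (by linarith)
    rw [norm_mul, norm_neg, Real.norm_eq_abs]
    exact mul_le_mul h1 (hM s (hsub hs)) (norm_nonneg _) ((abs_nonneg _).trans h1)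
  · simp
  · refine Eventually.of_forall fun s hs x' hx' => ?_
    exact (slp_hasDerivAt_Ustar α a (t - s) x').mul_const _

/-- Change of variables. -/
lemma slp_subst (α t z : ℝ) (hα : 0 < α) (ht : 0 < t) (hz : 0 < z) (h : ℝ → ℝ) :
    (1 / α) * ∫ s in (0:ℝ)..t, (α * z / (2 * (t - s))) * Ustar α z (t - s) * h s =
    ∫ y in Set.Ioi (0:ℝ), (1 / √π) * Real.exp (-1 * y ^ 2) *
      (Set.Ioo 0 t).indicator h (t - α * z ^ 2 / (4 * y ^ 2)) := by
  set f : ℝ → ℝ := fun y => t - α * z ^ 2 / (4 * y ^ 2) with hf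
  have himg : f '' Set.Ioi 0 = Set.Iio t := by
    ext s
    constructor
    · rintro ⟨y, hy, rfl⟩
      have hy : 0 < y := hy
      have : 0 < α * z ^ 2 / (4 * y ^ 2) := by positivity
      simp only [hf, Set.mem_Iio]; linarith
    · intro hs
      have hs : 0 < t - s := sub_pos.2 hs
      refine ⟨√(α * z ^ 2 / (4 * (t - s))), Set.mem_Ioi.2 (by positivity), ?_⟩
      simp only [hf]
      rw [Real.sq_sqrt (by positivity)]
      field_simp
      ring
  have hinj : Set.InjOn f (Set.Ioi 0) := by
    intro y hy y' hy' e
    have hy : 0 < y := hy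
    have hy' : 0 < y' := hy'
    simp only [hf, sub_right_inj] at e
    have hne : α * z ^ 2 ≠ 0 := by positivity
    rw [div_eq_div_iff (by positivity) (by positivity)] at e
    have e2 := mul_left_cancel₀ hne e
    have e3 : y ^ 2 = y' ^ 2 := by linarith
    exact (pow_left_inj₀ hy.le hy'.le two_ne_zero).1 e3
  have hder : ∀ y ∈ Set.Ioi (0:ℝ),
      HasDerivWithinAt f (α * z ^ 2 / (2 * y ^ 3)) (Set.Ioi 0) y := by
    intro y hy
    have hy : 0 < y := hy
    have h1 : HasDerivAt (fun y : ℝ => 4 * y ^ 2) (4 * (2 * y)) y := by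
      simpa using (hasDerivAt_pow 2 y).const_mul 4
    have h2 := ((hasDerivAt_const y (α * z ^ 2)).div h1 (by positivity)).const_sub t
    refine HasDerivAt.hasDerivWithinAt ?_
    refine h2.congr_deriv ?_
    field_simp
    ring
  have key := integral_image_eq_integral_abs_deriv_smul measurableSet_Ioi hder hinj
    (fun s => (1 / α) * ((α * z / (2 * (t - s))) * Ustar α z (t - s) *
      (Set.Ioo 0 t).indicator h s))
  have hL : (1 / α) * ∫ s in (0:ℝ)..t, (α * z / (2 * (t - s))) * Ustar α z (t - s) * h s =
      ∫ s in Set.Iio t, (1 / α) * ((α * z / (2 * (t - s))) * Ustar α z (t - s) *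
      (Set.Ioo 0 t).indicator h s) := by
    rw [intervalIntegral.integral_of_le ht.le, integral_Ioc_eq_integral_Ioo,
      ← MeasureTheory.integral_const_mul]
    have e : ∀ s, (1 / α) * ((α * z / (2 * (t - s))) * Ustar α z (t - s) *
      (Set.Ioo 0 t).indicator h s) = (Set.Ioo 0 t).indicator
      (fun s => (1 / α) * ((α * z / (2 * (t - s))) * Ustar α z (t - s) * h s)) s := by
      intro s
      by_cases hs : s ∈ Set.Ioo 0 t <;> simp [hs]
    simp_rw [e]
    rw [MeasureTheory.setIntegral_indicator measurableSet_Ioo]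
    congr 2
    ext s; simp
  rw [hL, ← himg, key]
  refine setIntegral_congr_fun measurableSet_Ioi fun y hy => ?_
  have hy : 0 < y := hy
  have e1 : t - f y = α * z ^ 2 / (4 * y ^ 2) := by simp only [hf]; ring
  have hp : 0 < α * z ^ 2 / (4 * y ^ 2) := by positivity
  simp only [smul_eq_mul, e1]
  rw [abs_of_pos (by positivity)]
  unfold Ustar
  rw [if_pos hp]
  have e2 : α / (4 * π * (α * z ^ 2 / (4 * y ^ 2))) = (y / z) ^ 2 / π := by field_simp
  have e3 : -(α * z ^ 2) / (4 * (α * z ^ 2 / (4 * y ^ 2))) = -1 * y ^ 2 := by field_simp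
  rw [e2, e3, Real.sqrt_div (by positivity), Real.sqrt_sq (by positivity)]
  have : 0 < √π := by positivity
  change _ = (1 / √π) * Real.exp (-1 * y ^ 2) * (Set.Ioo 0 t).indicator h (f y)
  generalize (Set.Ioo 0 t).indicator h (f y) = G
  field_simp
  ring

lemma slp_limit (α T t : ℝ) (hα : 0 < α) (ht : 0 < t) (htT : t ≤ T) (h : ℝ → ℝ)
    (hh : ContinuousOn h (Set.Icc 0 T)) :
    Tendsto (fun z : ℝ => ∫ y in Set.Ioi (0:ℝ), (1 / √π) * Real.exp (-1 * y ^ 2) *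
      (Set.Ioo 0 t).indicator h (t - α * z ^ 2 / (4 * y ^ 2))) (𝓝[>] 0) (𝓝 (1 / 2 * h t)) := by
  have hsub : Set.Ioo 0 t ⊆ Set.Icc 0 T := fun s hs => ⟨hs.1.le, hs.2.le.trans htT⟩
  obtain ⟨M, hM⟩ := isCompact_Icc.exists_bound_of_continuousOn hh
  have hM0 : 0 ≤ M := (norm_nonneg _).trans (hM t ⟨ht.le, htT⟩)
  have hGm : Measurable ((Set.Ioo 0 t).indicator h) := by
    classical
    have := ContinuousOn.measurable_piecewise (f := h) (g := fun _ => (0:ℝ)) (s := Set.Ioo 0 t)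
      (hh.mono hsub) continuousOn_const measurableSet_Ioo
    exact Set.piecewise_eq_indicator (f := h) (s := Set.Ioo 0 t) ▸ this
  have hGb : ∀ s, ‖(Set.Ioo 0 t).indicator h s‖ ≤ M := by
    intro s
    by_cases hs : s ∈ Set.Ioo 0 t
    · simpa [hs] using hM s (hsub hs)
    · simpa [hs] using hM0
  have hval : 1 / 2 * h t = ∫ y in Set.Ioi (0:ℝ), (1 / √π) * Real.exp (-1 * y ^ 2) * h t := by
    rw [MeasureTheory.integral_mul_const, MeasureTheory.integral_const_mul, integral_gaussian_Ioi]
    have : 0 < √π := by positivity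
    rw [div_one]
    field_simp
  have hGt : Tendsto ((Set.Ioo 0 t).indicator h) (𝓝[<] t) (𝓝 (h t)) := by
    have h1 : Tendsto h (𝓝[Set.Ioo 0 t] t) (𝓝 (h t)) :=
      (hh t ⟨ht.le, htT⟩).mono_left (nhdsWithin_mono _ hsub)
    rw [nhdsWithin_Ioo_eq_nhdsLT ht] at h1
    refine h1.congr' ?_
    filter_upwards [Ioo_mem_nhdsLT ht] with s hs
    simp [hs]
  rw [hval]
  refine MeasureTheory.tendsto_integral_filter_of_dominated_convergence
    (fun y => (1 / √π) * Real.exp (-1 * y ^ 2) * M) ?_ ?_ ?_ ?_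
  · refine Eventually.of_forall fun z => Measurable.aestronglyMeasurable ?_
    exact Measurable.mul (by fun_prop) (hGm.comp (by fun_prop))
  · refine Eventually.of_forall fun z => Eventually.of_forall fun y => ?_
    rw [norm_mul, Real.norm_of_nonneg (by positivity)]
    exact mul_le_mul_of_nonneg_left (hGb _) (by positivity)
  · exact (((integrable_exp_neg_mul_sq one_pos).const_mul _).mul_const _).integrableOn
  · refine (ae_restrict_iff' measurableSet_Ioi).2 (Eventually.of_forall fun y hy => ?_)
    have hy : 0 < y := hy
    refine Tendsto.const_mul _ (hGt.comp ?_)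
    refine tendsto_nhdsWithin_iff.2 ⟨?_, ?_⟩
    · have : Continuous (fun z : ℝ => t - α * z ^ 2 / (4 * y ^ 2)) := by fun_prop
      have h2 := this.tendsto 0
      simp only [ne_eq, OfNat.ofNat_ne_zero, not_false_eq_true, zero_pow, mul_zero, zero_div,
        sub_zero] at h2
      exact h2.mono_left nhdsWithin_le_nhds
    · filter_upwards [self_mem_nhdsWithin] with z hz
      have hz : 0 < z := hz
      have : 0 < α * z ^ 2 / (4 * y ^ 2) := by positivity
      simp only [Set.mem_Iio]; linarith

/-- For continuous `h`, every `t ∈ (0,T]` and every `x > a`, the single layer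
heat potential `ũ(x,t) = (1/α)·∫_0^t U*(x−a, t−s) h(s) ds` is differentiable
in `x` with
`∂_x ũ(x,t) = −(1/α)·∫_0^t (α(x−a)/(2(t−s)))·U*(x−a, t−s) h(s) ds`,
and the interior conormal derivative satisfies the jump relation
`lim_{x→a⁺} (−∂_x ũ(x,t)) = (1/2)·h(t)`. -/
theorem single_layer_potential_conormal_jump_relation (α T a : ℝ) (hα : 0 < α) (hT : 0 < T)
    (h : ℝ → ℝ) (hh : ContinuousOn h (Set.Icc 0 T))
    (t : ℝ) (ht : 0 < t) (htT : t ≤ T) :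
    (∀ x : ℝ, a < x →
      HasDerivAt (fun x' => (1 / α) * ∫ s in (0:ℝ)..t, Ustar α (x' - a) (t - s) * h s)
        (-(1 / α) *
          ∫ s in (0:ℝ)..t, (α * (x - a) / (2 * (t - s))) * Ustar α (x - a) (t - s) * h s) x) ∧
    Tendsto (fun x =>
        -(deriv (fun x' => (1 / α) * ∫ s in (0:ℝ)..t, Ustar α (x' - a) (t - s) * h s) x))
      (𝓝[>] a) (𝓝 ((1 / 2) * h t)) := by
  have hd := slp_deriv α T a hα h hh t ht htT
  refine ⟨hd, ?_⟩
  have h1 : Tendsto (fun x : ℝ => x - a) (𝓝[>] a) (𝓝[>] 0) := by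
    refine tendsto_nhdsWithin_iff.2 ⟨?_, ?_⟩
    · have : Continuous (fun x : ℝ => x - a) := by fun_prop
      have h2 := this.tendsto a
      rw [sub_self] at h2
      exact h2.mono_left nhdsWithin_le_nhds
    · filter_upwards [self_mem_nhdsWithin] with x hx
      exact sub_pos.2 (Set.mem_Ioi.1 hx)
  refine ((slp_limit α T t hα ht htT h hh).comp h1).congr' ?_
  filter_upwards [self_mem_nhdsWithin] with x hx
  rw [(hd x hx).deriv, Function.comp_apply, ← slp_subst α t (x - a) hα ht (sub_pos.2 hx) h]
  ring
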